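/- Let (R, m) be a Noetherian local ring of positive depth and x ∈ m a non-zerodivisor on R. Then R satisfies (SAC) if and only if R/xR satisfies (SAC). -/

import Mathlib

open CategoryTheory

/-- The `i`-th Ext group of `R`-modules `M` and `N`. -/
noncomputable abbrev ExtGroup (R : Type) [CommRing R] (M N : ModuleCat.{0} R) (i : ℕ) : Type :=
  (((Ext R (ModuleCat.{0} R) i).obj (Opposite.op M)).obj N)

/-- The symmetric Auslander condition (SAC): for every finitely generated `R`-module `M`,
if `Ext^i(M,R) = 0` for all `i > 0` and `Ext^i(M,M) = 0` for `i ≫ 0`,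
then `Ext^i(M,M) = 0` for all `i > 0`. -/
def SAC (R : Type) [CommRing R] : Prop :=
  ∀ M : ModuleCat.{0} R, Module.Finite R M →
    (∀ i : ℕ, 0 < i → Subsingleton (ExtGroup R M (ModuleCat.of R R) i)) →
    (∃ N : ℕ, ∀ i : ℕ, N < i → Subsingleton (ExtGroup R M M i)) →
    ∀ i : ℕ, 0 < i → Subsingleton (ExtGroup R M M i)


open CategoryTheory.Abelian

/-- Vanishing of the `i`-th Ext group (derived category version), unbundled. -/
def V (R : Type) [CommRing R] (M N : Type) [AddCommGroup M] [Module R M] [AddCommGroup N]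
    [Module R N] (i : ℕ) : Prop :=
  Subsingleton (Abelian.Ext (ModuleCat.of R M) (ModuleCat.of R N) i)

theorem extGroup_iff (R : Type) [CommRing R] (M N : ModuleCat.{0} R) (i : ℕ) (hi : 0 < i) :
    Subsingleton (ExtGroup R M N i) ↔ V R M N i := by
  obtain ⟨p, rfl⟩ : ∃ p, i = p + 1 := ⟨i - 1, by omega⟩
  let P := projectiveResolution M
  have h1 : Subsingleton (ExtGroup R M N (p + 1)) ↔
      ∀ f : P.complex.X (p + 1) ⟶ N, P.complex.d (p + 2) (p + 1) ≫ f = 0 →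
        ∃ g : P.complex.X p ⟶ N, P.complex.d (p + 1) p ≫ g = f := by
    rw [← ModuleCat.isZero_iff_subsingleton]
    rw [(P.isoExt (R := R) (p + 1) N).isZero_iff]
    rw [← HomologicalComplex.exactAt_iff_isZero_homology,
      HomologicalComplex.exactAt_iff' _ p (p + 1) (p + 2) (by simp) (by simp)]
    rw [ShortComplex.moduleCat_exact_iff]
    rfl
  rw [h1]
  have h2 : ∀ f hf, _ := fun f hf =>
    P.extMk_eq_zero_iff (n := p + 1) (Y := N) f (p + 2) rfl hf p rfl
  constructor
  · intro h
    refine subsingleton_of_forall_eq 0 fun α => ?_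
    obtain ⟨f, hf, rfl⟩ := P.extMk_surjective α (p + 2) rfl
    exact (h2 f hf).2 (h f hf)
  · intro h f hf
    exact (h2 f hf).1 (@Subsingleton.elim _ h _ _)

section LES

variable {R : Type} [CommRing R] {A B C X : Type} [AddCommGroup A] [Module R A]
  [AddCommGroup B] [Module R B] [AddCommGroup C] [Module R C] [AddCommGroup X] [Module R X]

theorem ses {f : A →ₗ[R] B} {g : B →ₗ[R] C} (hf : Function.Injective f)
    (hg : Function.Surjective g) (hfg : Function.Exact f g) :
    (ShortComplex.mk (ModuleCat.ofHom f) (ModuleCat.ofHom g)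
      (by ext a; exact hfg.apply_apply_eq_zero a)).ShortExact where
  exact := by
    rw [ShortComplex.moduleCat_exact_iff]
    intro b hb
    exact (hfg b).1 hb
  mono_f := (ModuleCat.mono_iff_injective _).2 hf
  epi_g := (ModuleCat.epi_iff_surjective _).2 hg

theorem V.cov1 {f : A →ₗ[R] B} {g : B →ₗ[R] C} (hf : Function.Injective f)
    (hg : Function.Surjective g) (hfg : Function.Exact f g) (i : ℕ)
    (h₀ : V R X C i) (h₁ : V R X B (i + 1)) : V R X A (i + 1) := by
  refine subsingleton_of_forall_eq 0 fun α => ?_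
  obtain ⟨y, rfl⟩ := Ext.covariant_sequence_exact₁ (ModuleCat.of R X) (ses hf hg hfg) α
    (@Subsingleton.elim _ h₁ _ _) rfl
  rw [@Subsingleton.elim _ h₀ y 0]; simp

theorem V.cov2 {f : A →ₗ[R] B} {g : B →ₗ[R] C} (hf : Function.Injective f)
    (hg : Function.Surjective g) (hfg : Function.Exact f g) (i : ℕ)
    (h₀ : V R X A i) (h₁ : V R X C i) : V R X B i := by
  refine subsingleton_of_forall_eq 0 fun α => ?_
  obtain ⟨y, rfl⟩ := Ext.covariant_sequence_exact₂ (ModuleCat.of R X) (ses hf hg hfg) α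
    (@Subsingleton.elim _ h₁ _ _)
  rw [@Subsingleton.elim _ h₀ y 0]; simp

theorem V.cov3 {f : A →ₗ[R] B} {g : B →ₗ[R] C} (hf : Function.Injective f)
    (hg : Function.Surjective g) (hfg : Function.Exact f g) (i : ℕ)
    (h₀ : V R X B i) (h₁ : V R X A (i + 1)) : V R X C i := by
  refine subsingleton_of_forall_eq 0 fun α => ?_
  obtain ⟨y, rfl⟩ := Ext.covariant_sequence_exact₃ (ModuleCat.of R X) (ses hf hg hfg) α rfl
    (@Subsingleton.elim _ h₁ _ _)
  rw [@Subsingleton.elim _ h₀ y 0]; simp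

theorem V.con1 {f : A →ₗ[R] B} {g : B →ₗ[R] C} (hf : Function.Injective f)
    (hg : Function.Surjective g) (hfg : Function.Exact f g) (i : ℕ)
    (h₀ : V R B X i) (h₁ : V R C X (i + 1)) : V R A X i := by
  refine subsingleton_of_forall_eq 0 fun α => ?_
  obtain ⟨y, rfl⟩ := Ext.contravariant_sequence_exact₁ (ses hf hg hfg) (ModuleCat.of R X) α
    (add_comm 1 i) (@Subsingleton.elim _ h₁ _ _)
  rw [@Subsingleton.elim _ h₀ y 0]; simp

theorem V.con2 {f : A →ₗ[R] B} {g : B →ₗ[R] C} (hf : Function.Injective f)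
    (hg : Function.Surjective g) (hfg : Function.Exact f g) (i : ℕ)
    (h₀ : V R C X i) (h₁ : V R A X i) : V R B X i := by
  refine subsingleton_of_forall_eq 0 fun α => ?_
  obtain ⟨y, rfl⟩ := Ext.contravariant_sequence_exact₂ (ses hf hg hfg) (ModuleCat.of R X) α
    (@Subsingleton.elim _ h₁ _ _)
  rw [@Subsingleton.elim _ h₀ y 0]; simp

theorem V.con3 {f : A →ₗ[R] B} {g : B →ₗ[R] C} (hf : Function.Injective f)
    (hg : Function.Surjective g) (hfg : Function.Exact f g) (i : ℕ)
    (h₀ : V R A X i) (h₁ : V R B X (i + 1)) : V R C X (i + 1) := by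
  refine subsingleton_of_forall_eq 0 fun α => ?_
  obtain ⟨y, rfl⟩ := Ext.contravariant_sequence_exact₃ (ses hf hg hfg) (ModuleCat.of R X) α
    (@Subsingleton.elim _ h₁ _ _) (add_comm 1 i)
  rw [@Subsingleton.elim _ h₀ y 0]; simp

/-- First Ext vanishes iff maps extend. -/
theorem V.one_iff {f : A →ₗ[R] B} {g : B →ₗ[R] C} (hf : Function.Injective f)
    (hg : Function.Surjective g) (hfg : Function.Exact f g)
    [Module.Projective R B] :
    V R C X 1 ↔ ∀ u : A →ₗ[R] X, ∃ v : B →ₗ[R] X, ∀ a, v (f a) = u a := by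
  have hP : Projective (ModuleCat.of R B) := ModuleCat.projective_of_categoryTheory_projective _
  constructor
  · intro h u
    obtain ⟨y, hy⟩ := Ext.contravariant_sequence_exact₁ (ses hf hg hfg) (ModuleCat.of R X)
      (Ext.mk₀ (ModuleCat.ofHom u)) (add_comm 1 0) (@Subsingleton.elim _ h _ _)
    obtain ⟨v, rfl⟩ := (Ext.mk₀_bijective _ _).2 y
    rw [Ext.mk₀_comp_mk₀, (Ext.mk₀_bijective _ _).1.eq_iff] at hy
    exact ⟨v.hom, fun a => congrArg (fun z => z.hom a) hy⟩
  · intro h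
    refine subsingleton_of_forall_eq 0 fun α => ?_
    obtain ⟨y, rfl⟩ := Ext.contravariant_sequence_exact₃ (ses hf hg hfg) (ModuleCat.of R X) α
      (Ext.eq_zero_of_projective (P := ModuleCat.of R B) _) (add_comm 1 0)
    obtain ⟨u, rfl⟩ := (Ext.mk₀_bijective _ _).2 y
    obtain ⟨v, hv⟩ := h u.hom
    have : u = (ModuleCat.ofHom f) ≫ (ModuleCat.ofHom v) := by
      ext a; exact (hv a).symm
    rw [this, ← Ext.mk₀_comp_mk₀]
    exact (ses hf hg hfg).extClass_comp_assoc _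

end LES

theorem V.proj {R : Type} [CommRing R] {P X : Type} [AddCommGroup P] [Module R P]
    [AddCommGroup X] [Module R X] [Module.Projective R P] (i : ℕ) : V R P X (i + 1) := by
  have hP : Projective (ModuleCat.of R P) := ModuleCat.projective_of_categoryTheory_projective _
  exact Ext.subsingleton_of_projective (ModuleCat.of R P) (ModuleCat.of R X) i

theorem V.pi {R : Type} [CommRing R] {M : Type} [AddCommGroup M] [Module R M] (i : ℕ)
    (h : V R M R i) (n : ℕ) : V R M (Fin n → R) i := by
  induction n with
  | zero =>
    refine subsingleton_of_forall_eq 0 fun α => ?_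
    rw [← Ext.comp_mk₀_id α]
    have : 𝟙 (ModuleCat.of R (Fin 0 → R)) = 0 := by
      refine ModuleCat.hom_ext (LinearMap.ext fun a => ?_)
      exact Subsingleton.elim (α := Fin 0 → R) _ _
    rw [this]; simp
  | succ n ih =>
    refine V.cov2 (f := LinearMap.single R (fun _ : Fin (n + 1) => R) 0)
      (g := LinearMap.funLeft R R Fin.succ) ?_ ?_ ?_ i h ih
    · exact fun a b h => Pi.single_injective (M := fun _ : Fin (n + 1) => R) 0 h
    · exact LinearMap.funLeft_surjective_of_injective _ _ _ (Fin.succ_injective _)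
    · intro y
      constructor
      · intro hy
        refine ⟨y 0, ?_⟩
        ext j
        refine Fin.cases ?_ (fun k => ?_) j
        · simp
        · have := congrFun hy k
          simp [LinearMap.funLeft_apply] at this
          simp [this]
      · rintro ⟨r, rfl⟩
        ext k
        simp [LinearMap.funLeft_apply]

theorem SAC_iff (R : Type) [CommRing R] : SAC R ↔
    ∀ (M : Type) [AddCommGroup M] [Module R M] [Module.Finite R M],
      (∀ i, 0 < i → V R M R i) → (∃ N : ℕ, ∀ i, N < i → V R M M i) → ∀ i, 0 < i → V R M M i := by
  constructor
  · intro h M _ _ hfin h1 ⟨N, h2⟩ i hi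
    rw [← extGroup_iff R (ModuleCat.of R M) (ModuleCat.of R M) i hi]
    refine h (ModuleCat.of R M) hfin (fun j hj => ?_) ⟨N, fun j hj => ?_⟩ i hi
    · exact (extGroup_iff R (ModuleCat.of R M) (ModuleCat.of R R) j hj).2 (h1 j hj)
    · exact (extGroup_iff R (ModuleCat.of R M) (ModuleCat.of R M) j (by omega)).2 (h2 j hj)
  · intro h M hfin h1 ⟨N, h2⟩ i hi
    rw [extGroup_iff R M M i hi]
    refine h M (fun j hj => ?_) ⟨N, fun j hj => ?_⟩ i hi
    · exact (extGroup_iff R M (ModuleCat.of R R) j hj).1 (h1 j hj)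
    · exact (extGroup_iff R M M j (by omega)).1 (h2 j hj)

section Red

/-- `p : M → L` exhibits `L` as `M / x M`. -/
structure Red {R : Type} [CommRing R] (x : R) {M L : Type} [AddCommGroup M] [Module R M]
    [AddCommGroup L] [Module R L] (p : M →ₗ[R] L) : Prop where
  surj : Function.Surjective p
  ker : ∀ m, p m = 0 ↔ ∃ m', m = x • m'

theorem exists_lift {R : Type} [CommRing R] {F M N : Type} [AddCommGroup M] [Module R M]
    [AddCommGroup F] [Module R F] [AddCommGroup N] [Module R N] (p : F →ₗ[R] M)
    (hp : Function.Surjective p) (f : F →ₗ[R] N) (h : ∀ a, p a = 0 → f a = 0) :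
    ∃ g : M →ₗ[R] N, ∀ a, g (p a) = f a := by
  refine ⟨((LinearMap.ker p).liftQ f h).comp
    (p.quotKerEquivOfSurjective hp).symm.toLinearMap, fun a => ?_⟩
  have : (p.quotKerEquivOfSurjective hp).symm (p a) = Submodule.Quotient.mk a := by
    rw [LinearEquiv.symm_apply_eq]; rfl
  rw [LinearMap.comp_apply, LinearEquiv.coe_coe, this]
  rfl

variable {R : Type} [CommRing R] {x : R}

theorem exists_liftS {F M N : Type} [AddCommGroup F] [Module R F]
    [AddCommGroup M] [Module R M] [Module (R ⧸ Ideal.span {x}) M]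
    [IsScalarTower R (R ⧸ Ideal.span {x}) M]
    [AddCommGroup N] [Module R N] [Module (R ⧸ Ideal.span {x}) N]
    [IsScalarTower R (R ⧸ Ideal.span {x}) N] (p : F →ₗ[R] M)
    (hp : Function.Surjective p) (f : F →ₗ[R] N) (h : ∀ a, p a = 0 → f a = 0) :
    ∃ g : M →ₗ[R ⧸ Ideal.span {x}] N, ∀ a, g (p a) = f a := by
  obtain ⟨g, hg⟩ := exists_lift p hp f h
  exact ⟨LinearMap.extendScalarsOfSurjective Ideal.Quotient.mk_surjective g, hg⟩

theorem x_smul {N : Type} [AddCommGroup N] [Module R N] [Module (R ⧸ Ideal.span {x}) N]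
    [IsScalarTower R (R ⧸ Ideal.span {x}) N] (n : N) : x • n = 0 := by
  rw [← one_smul (R ⧸ Ideal.span {x}) n, ← smul_assoc]
  have : x • (1 : R ⧸ Ideal.span {x}) = 0 := by
    rw [← map_one (Ideal.Quotient.mk (Ideal.span {x})), ← Ideal.Quotient.mk_eq_mk,
      ← Submodule.Quotient.mk_smul, Submodule.Quotient.mk_eq_zero]
    simp
  rw [this, zero_smul]

theorem Red.lift {M L N : Type} [AddCommGroup M] [Module R M]
    [AddCommGroup L] [Module R L] [Module (R ⧸ Ideal.span {x}) L]
    [IsScalarTower R (R ⧸ Ideal.span {x}) L]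
    [AddCommGroup N] [Module R N] [Module (R ⧸ Ideal.span {x}) N]
    [IsScalarTower R (R ⧸ Ideal.span {x}) N] {p : M →ₗ[R] L} (hp : Red x p) (f : M →ₗ[R] N) :
    ∃ g : L →ₗ[R ⧸ Ideal.span {x}] N, ∀ a, g (p a) = f a := by
  refine exists_liftS p hp.surj f fun a ha => ?_
  obtain ⟨m, rfl⟩ := (hp.ker a).1 ha
  rw [map_smul, x_smul]

variable (x) in
theorem exists_red (M : Type) [AddCommGroup M] [Module R M] :
    Red x (Submodule.mkQ (Ideal.span {x} • (⊤ : Submodule R M))) where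
  surj := Submodule.mkQ_surjective _
  ker m := by
    rw [Submodule.mkQ_apply, Submodule.Quotient.mk_eq_zero, Submodule.ideal_span_singleton_smul,
      Submodule.mem_smul_pointwise_iff_exists]
    simp [eq_comm]

variable (x) in
theorem red_self : Red x (Algebra.linearMap R (R ⧸ Ideal.span {x})) where
  surj := Ideal.Quotient.mk_surjective
  ker m := by
    rw [Algebra.linearMap_apply, Ideal.Quotient.algebraMap_eq, Ideal.Quotient.eq_zero_iff_mem,
      Ideal.mem_span_singleton]
    rfl

variable (x) in
theorem red_finsupp (ι : Type) : Red x
    (Finsupp.mapRange.linearMap (α := ι) (Algebra.linearMap R (R ⧸ Ideal.span {x}))) where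
  surj := by
    exact Finsupp.mapRange_surjective _ (map_zero _) (red_self x).surj
  ker m := by
    constructor
    · intro h
      have : ∀ i, ∃ r, m i = x • r := fun i =>
        ((red_self x).ker _).1 (by simpa using DFunLike.congr_fun h i)
      choose r hr using this
      classical
      refine ⟨Finsupp.onFinset m.support (fun i => if m i = 0 then 0 else r i) ?_, ?_⟩
      · intro i hi
        simp only [Finsupp.mem_support_iff]
        intro h; simp [h] at hi
      · ext i
        by_cases h0 : m i = 0
        · simp [h0]
        · simp [h0]
          exact hr i
    · rintro ⟨m', rfl⟩
      rw [map_smul, x_smul]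

theorem red_step {M L N F G : Type} [AddCommGroup M] [Module R M]
    [AddCommGroup L] [Module R L] [Module (R ⧸ Ideal.span {x}) L]
    [IsScalarTower R (R ⧸ Ideal.span {x}) L]
    [AddCommGroup N] [Module R N] [Module (R ⧸ Ideal.span {x}) N]
    [IsScalarTower R (R ⧸ Ideal.span {x}) N]
    [AddCommGroup F] [Module R F] [Module.Projective R F]
    [AddCommGroup G] [Module R G] [Module (R ⧸ Ideal.span {x}) G]
    [IsScalarTower R (R ⧸ Ideal.span {x}) G] [Module.Projective (R ⧸ Ideal.span {x}) G]
    {p : M →ₗ[R] L} (hp : Red x p) (hM : IsSMulRegular M x)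
    {r : F →ₗ[R] G} (hF : Red x r)
    {π : F →ₗ[R] M} (hπ : Function.Surjective π) (K : Submodule R F)
    (hKm : ∀ f, f ∈ K ↔ π f = 0) :
    (V R M N 1 ↔ V (R ⧸ Ideal.span {x}) L N 1) ∧
    ∀ i, (V R K N (i + 1) ↔ V (R ⧸ Ideal.span {x})
      (K ⧸ (Ideal.span {x} • (⊤ : Submodule R K))) N (i + 1)) →
      (V R M N (i + 1 + 1) ↔ V (R ⧸ Ideal.span {x}) L N (i + 1 + 1)) := by
  have hex : Function.Exact K.subtype π := by
    intro b
    rw [← hKm]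
    simp
  have hK := exists_red x K
  obtain ⟨j, hj⟩ := hK.lift (r.comp K.subtype)
  obtain ⟨q, hq⟩ := hF.lift (p.comp π)
  have hjinj : Function.Injective j := by
    rw [injective_iff_map_eq_zero]
    intro a ha
    obtain ⟨k, rfl⟩ := hK.surj a
    rw [hj] at ha
    obtain ⟨f, hf⟩ := (hF.ker _).1 ha
    rw [hK.ker]
    have hf' : f ∈ K := by
      rw [hKm]
      refine hM ?_
      have h0 : π k = 0 := (hKm _).1 k.2
      simp only [smul_zero]
      rw [← map_smul, ← h0]
      exact congrArg π hf.symm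
    exact ⟨⟨f, hf'⟩, Subtype.ext hf⟩
  have hqsurj : Function.Surjective q := by
    intro l
    obtain ⟨m, rfl⟩ := hp.surj l
    obtain ⟨f, rfl⟩ := hπ m
    exact ⟨_, hq f⟩
  have hexS : Function.Exact j q := by
    intro b
    obtain ⟨f, rfl⟩ := hF.surj b
    constructor
    · intro h
      rw [hq] at h
      obtain ⟨m, hm⟩ := (hp.ker _).1 h
      obtain ⟨f', rfl⟩ := hπ m
      have hk : f - x • f' ∈ K := by
        rw [hKm, map_sub, map_smul, hm, sub_self]
      refine ⟨Submodule.mkQ _ ⟨_, hk⟩, ?_⟩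
      rw [hj]
      simp only [LinearMap.comp_apply, Submodule.subtype_apply]
      rw [map_sub, map_smul, x_smul, sub_zero]
    · rintro ⟨a, ha⟩
      obtain ⟨k, rfl⟩ := hK.surj a
      rw [hj] at ha
      rw [← ha]
      simp only [LinearMap.comp_apply, Submodule.subtype_apply]
      rw [hq, LinearMap.comp_apply, show π k = 0 from (hKm _).1 k.2, map_zero]
  refine ⟨?_, fun i hi => ?_⟩
  · rw [V.one_iff (f := K.subtype) K.injective_subtype hπ hex, V.one_iff hjinj hqsurj hexS]
    constructor
    · intro h u
      obtain ⟨v, hv⟩ := h ((u.restrictScalars R).comp (Submodule.mkQ _))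
      obtain ⟨w, hw⟩ := hF.lift v
      refine ⟨w, fun a => ?_⟩
      obtain ⟨k, rfl⟩ := hK.surj a
      rw [hj, LinearMap.comp_apply, hw]
      exact hv k
    · intro h u
      obtain ⟨v, hv⟩ := hK.lift u
      obtain ⟨w, hw⟩ := h v
      refine ⟨(w.restrictScalars R).comp r, fun k => ?_⟩
      have := hj k
      rw [LinearMap.comp_apply] at this
      rw [LinearMap.comp_apply, ← this, ← hv]
      exact hw _
  · have h1 : V R M N (i + 1 + 1) ↔ V R K N (i + 1) :=
      ⟨fun h => V.con1 K.injective_subtype hπ hex _ (V.proj i) h,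
        fun h => V.con3 K.injective_subtype hπ hex _ h (V.proj (i + 1))⟩
    have h2 : V (R ⧸ Ideal.span {x}) L N (i + 1 + 1) ↔
        V (R ⧸ Ideal.span {x}) (K ⧸ (Ideal.span {x} • (⊤ : Submodule R K))) N (i + 1) :=
      ⟨fun h => V.con1 hjinj hqsurj hexS _ (V.proj i) h,
        fun h => V.con3 hjinj hqsurj hexS _ h (V.proj (i + 1))⟩
    rw [h1, h2]
    exact hi

/-- Change of rings. -/
theorem V.red_iff (i : ℕ) : ∀ {M L N : Type} [AddCommGroup M] [Module R M]
    [AddCommGroup L] [Module R L] [Module (R ⧸ Ideal.span {x}) L]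
    [IsScalarTower R (R ⧸ Ideal.span {x}) L]
    [AddCommGroup N] [Module R N] [Module (R ⧸ Ideal.span {x}) N]
    [IsScalarTower R (R ⧸ Ideal.span {x}) N] {p : M →ₗ[R] L} (_ : Red x p)
    (_ : IsSMulRegular R x) (_ : IsSMulRegular M x),
    V R M N (i + 1) ↔ V (R ⧸ Ideal.span {x}) L N (i + 1) := by
  induction i with
  | zero =>
    intro M L N _ _ _ _ _ _ _ _ _ _ p hp hR hM
    exact (red_step hp hM (red_finsupp x M) (Finsupp.linearCombination_id_surjective R M)
      _ (fun f => LinearMap.mem_ker)).1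
  | succ i ih =>
    intro M L N _ _ _ _ _ _ _ _ _ _ p hp hR hM
    refine (red_step hp hM (red_finsupp x M) (Finsupp.linearCombination_id_surjective R M)
      _ (fun f => LinearMap.mem_ker)).2 i (ih (exists_red x _) hR ?_)
    intro a b h
    refine Subtype.ext (Finsupp.ext fun m => hR ?_)
    exact DFunLike.congr_fun (congrArg Subtype.val h) m

/-- Nakayama. -/
theorem V.nak [IsNoetherianRing R] [IsLocalRing R] (hx : x ∈ IsLocalRing.maximalIdeal R)
    {M N L : Type} [AddCommGroup M] [Module R M] [Module.Finite R M]
    [AddCommGroup N] [Module R N] [Module.Finite R N] [AddCommGroup L] [Module R L]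
    {p : N →ₗ[R] L} (hp : Red x p) (hN : IsSMulRegular N x) (i : ℕ) (h : V R M L i) :
    V R M N i := by
  have hex : Function.Exact (x • (LinearMap.id : N →ₗ[R] N)) p := by
    intro b
    rw [hp.ker]
    simp [eq_comm]
  by_contra ntr
  have ntr' : Nontrivial (Abelian.Ext (ModuleCat.of R M) (ModuleCat.of R N) i) :=
    not_subsingleton_iff_nontrivial.1 ntr
  have : x ∈ (Module.annihilator R
      (Abelian.Ext (ModuleCat.of R M) (ModuleCat.of R N) i)).jacobson :=
    (IsLocalRing.maximalIdeal_le_jacobson _) hx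
  refine absurd ?_ (Submodule.top_ne_pointwise_smul_of_mem_jacobson_annihilator this)
  rw [eq_comm, eq_top_iff]
  intro y hy
  obtain ⟨z, hz⟩ := Ext.covariant_sequence_exact₂ (ModuleCat.of R M) (ses (f := x • (LinearMap.id : N →ₗ[R] N)) hN hp.surj hex) y
    (@Subsingleton.elim _ h _ _)
  have hz' : x • z = y := by
    rw [← hz, Ext.smul_eq_comp_mk₀]
    rfl
  rw [← hz']
  exact Submodule.smul_mem_pointwise_smul _ _ ⊤ trivial

theorem V.key [IsNoetherianRing R] [IsLocalRing R] (hx : x ∈ IsLocalRing.maximalIdeal R)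
    (hR : IsSMulRegular R x)
    {M N L T : Type} [AddCommGroup M] [Module R M] [Module.Finite R M]
    [AddCommGroup N] [Module R N] [Module.Finite R N]
    [AddCommGroup L] [Module R L] [Module (R ⧸ Ideal.span {x}) L]
    [IsScalarTower R (R ⧸ Ideal.span {x}) L]
    [AddCommGroup T] [Module R T] [Module (R ⧸ Ideal.span {x}) T]
    [IsScalarTower R (R ⧸ Ideal.span {x}) T]
    {p : M →ₗ[R] L} {q : N →ₗ[R] T} (hp : Red x p) (hq : Red x q)
    (hM : IsSMulRegular M x) (hN : IsSMulRegular N x) (n : ℕ) :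
    (∀ i, n < i → V R M N i) ↔ (∀ i, n < i → V (R ⧸ Ideal.span {x}) L T i) := by
  have hex : Function.Exact (x • (LinearMap.id : N →ₗ[R] N)) q := by
    intro b
    rw [hq.ker]
    simp [eq_comm]
  constructor
  · intro h i hi
    obtain ⟨k, rfl⟩ : ∃ k, i = k + 1 := ⟨i - 1, by omega⟩
    rw [← V.red_iff k hp hR hM]
    exact V.cov3 (f := x • (LinearMap.id : N →ₗ[R] N)) hN hq.surj hex _ (h _ hi) (h _ (by omega))
  · intro h i hi
    obtain ⟨k, rfl⟩ : ∃ k, i = k + 1 := ⟨i - 1, by omega⟩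
    exact V.nak hx hq hN _ ((V.red_iff k hp hR hM).2 (h _ hi))

end Red

section Main

variable {R : Type} [CommRing R]

theorem exists_pres (M : Type) [AddCommGroup M] [Module R M] [Module.Finite R M] :
    ∃ (n : ℕ) (π : (Fin n → R) →ₗ[R] M), Function.Surjective π := Module.Finite.exists_fin' R M

theorem exact_ker {F M : Type} [AddCommGroup M] [Module R M]
    [AddCommGroup F] [Module R F] (π : F →ₗ[R] M) :
    Function.Exact (LinearMap.ker π).subtype π := LinearMap.exact_subtype_ker_map π

theorem pi_regular {x : R} (hR : IsSMulRegular R x) (n : ℕ) : IsSMulRegular (Fin n → R) x := by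
  intro a b h
  funext j
  exact hR (congrFun h j)

theorem sub_regular {x : R} {F : Type} [AddCommGroup F] [Module R F] (hF : IsSMulRegular F x)
    (K : Submodule R F) : IsSMulRegular K x := by
  intro a b h
  exact Subtype.ext (hF (congrArg Subtype.val h))

/-- SAC passes from `R/x` to `R`. -/
theorem sac_of_quot [IsNoetherianRing R] [IsLocalRing R] {x : R}
    (hx : x ∈ IsLocalRing.maximalIdeal R) (hR : IsSMulRegular R x)
    (h : SAC (R ⧸ Ideal.span {x})) : SAC R := by
  rw [SAC_iff] at h ⊢
  intro M _ _ _ h1 ⟨B, h2⟩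
  obtain ⟨n, π, hπ⟩ := exists_pres (R := R) M
  have hex := exact_ker π
  have hinj := (LinearMap.ker π).injective_subtype
  have hKreg := sub_regular (pi_regular hR n) (LinearMap.ker π)
  have hKR : ∀ i, 0 < i → V R (LinearMap.ker π) R i := by
    intro i hi
    obtain ⟨k, rfl⟩ : ∃ k, i = k + 1 := ⟨i - 1, by omega⟩
    exact V.con1 hinj hπ hex _ (V.proj k) (h1 _ (by omega))
  have hKK : ∀ i, 0 < i → (V R (LinearMap.ker π) (LinearMap.ker π) i ↔ V R M M i) := by
    intro i hi
    obtain ⟨k, rfl⟩ : ∃ k, i = k + 1 := ⟨i - 1, by omega⟩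
    constructor
    · intro hk
      have : V R M (LinearMap.ker π) (k + 1 + 1) := V.con3 hinj hπ hex _ hk (V.proj _)
      exact V.cov3 hinj hπ hex _ (V.pi _ (h1 _ hi) n) this
    · intro hk
      have : V R M (LinearMap.ker π) (k + 1 + 1) :=
        V.cov1 hinj hπ hex _ hk (V.pi _ (h1 _ (by omega)) n)
      exact V.con1 hinj hπ hex _ (V.proj _) this
  have hred := exists_red x (LinearMap.ker π)
  have hfin : Module.Finite (R ⧸ Ideal.span {x})
      ((LinearMap.ker π) ⧸ (Ideal.span {x} • (⊤ : Submodule R (LinearMap.ker π)))) :=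
    Module.Finite.of_restrictScalars_finite R _ _
  have key := V.key hx hR hred hred hKreg hKreg
  have res := h _ ((V.key hx hR hred (red_self x) hKreg hR 0).1 hKR)
    ⟨B, (key B).1 fun i hi => (hKK i (by omega)).2 (h2 i hi)⟩
  intro i hi
  exact (hKK i hi).1 ((key 0).2 res i hi)

/-- The homological argument over the quotient ring. -/
theorem chase {S : Type} [CommRing S] {N L K : Type} [AddCommGroup N] [Module S N]
    [AddCommGroup L] [Module S L] [AddCommGroup K] [Module S K] {n : ℕ}
    {ι : K →ₗ[S] (Fin n → S)} {π : (Fin n → S) →ₗ[S] N} (hι : Function.Injective ι)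
    (hπ : Function.Surjective π) (hex : Function.Exact ι π)
    {j : N →ₗ[S] L} {q : L →ₗ[S] K} (hj : Function.Injective j)
    (hq : Function.Surjective q) (hex' : Function.Exact j q)
    (h1 : ∀ i, 0 < i → V S N S i) {B : ℕ} (h2 : ∀ i, B < i → V S N N i) :
    (∀ i, 0 < i → V S L S i) ∧ (∀ i, B + 1 < i → V S L L i) ∧
    ((∀ i, 0 < i → V S L L i) → ∀ i, 0 < i → V S N N i) := by
  have hK : ∀ (X : Type) [AddCommGroup X] [Module S X] (i : ℕ), 0 < i → V S N X (i + 1) →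
      V S K X i := by
    intro X _ _ i hi h
    obtain ⟨k, rfl⟩ : ∃ k, i = k + 1 := ⟨i - 1, by omega⟩
    exact V.con1 hι hπ hex _ (V.proj k) h
  have hNK : ∀ i, B + 1 < i → V S N K i := by
    intro i hi
    obtain ⟨k, rfl⟩ : ∃ k, i = k + 1 := ⟨i - 1, by omega⟩
    exact V.cov1 hι hπ hex _ (h2 k (by omega)) (V.pi _ (h1 _ (by omega)) n)
  have hNL : ∀ i, B + 1 < i → V S N L i := fun i hi =>
    V.cov2 hj hq hex' _ (h2 i (by omega)) (hNK i hi)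
  refine ⟨fun i hi => ?_, fun i hi => ?_, fun h => ?_⟩
  · exact V.con2 hj hq hex' _ (hK _ i hi (h1 _ (by omega))) (h1 i hi)
  · exact V.con2 hj hq hex' _ (hK _ i (by omega) (hNL _ (by omega))) (hNL i hi)
  · have aux : ∀ (P : ℕ → Prop), (∀ i, B + 1 < i → P i) →
        (∀ i, 0 < i → P (i + 2) → P i) → ∀ i, 0 < i → P i := by
      intro P hP hs
      have : ∀ d i, 0 < i → B + 1 < i + d → P i := by
        intro d
        induction d with
        | zero => intro i _ h; exact hP i h
        | succ d ih => intro i hi h; exact hs i hi (ih (i + 2) (by omega) (by omega))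
      intro i hi
      exact this (B + 2) i hi (by omega)
    have hNL' : ∀ i, 0 < i → V S N L i := aux _ hNL fun i hi h' =>
      V.con1 hj hq hex' _ (h i hi) (hK _ _ (by omega) h')
    refine aux _ (fun i hi => h2 i (by omega)) fun i hi h' => ?_
    have : V S N K (i + 1) := V.cov3 hj hq hex' _ (hNL' _ (by omega)) h'
    exact V.cov3 hι hπ hex _ (V.pi _ (h1 i hi) n) this

theorem red_pi (x : R) (n : ℕ) : Red x ((Algebra.linearMap R (R ⧸ Ideal.span {x})).compLeft (Fin n)) where
  surj := (red_self x).surj.comp_left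
  ker m := by
    constructor
    · intro h
      have : ∀ i, ∃ r, m i = x • r := fun i =>
        ((red_self x).ker _).1 (congrFun h i)
      choose r hr using this
      exact ⟨r, funext hr⟩
    · rintro ⟨m', rfl⟩
      rw [map_smul, x_smul]

/-- SAC passes from `R` to `R/x`. -/
theorem quot_of_sac [IsNoetherianRing R] [IsLocalRing R] {x : R}
    (hx : x ∈ IsLocalRing.maximalIdeal R) (hR : IsSMulRegular R x)
    (h : SAC R) : SAC (R ⧸ Ideal.span {x}) := by
  rw [SAC_iff] at h ⊢
  intro N _ _ _ h1 ⟨B, h2⟩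
  letI : Module R N := Module.compHom N (Ideal.Quotient.mk (Ideal.span {x}))
  haveI : IsScalarTower R (R ⧸ Ideal.span {x}) N := IsScalarTower.of_algebraMap_smul fun _ _ => rfl
  haveI : Module.Finite R N := Module.Finite.trans (R ⧸ Ideal.span {x}) N
  obtain ⟨n, π, hπ⟩ := exists_pres (R := R) N
  have hKreg := sub_regular (pi_regular hR n) (LinearMap.ker π)
  have hred := exists_red x (LinearMap.ker π)
  have hF := red_pi x n
  obtain ⟨q, hq⟩ := hF.lift π
  have hqs : Function.Surjective q := fun a => by
    obtain ⟨f, rfl⟩ := hπ a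
    exact ⟨_, hq f⟩
  -- the map from the reduction of the syzygy onto the syzygy over the quotient
  obtain ⟨g₀, hg₀⟩ := hred.lift
    (((Algebra.linearMap R (R ⧸ Ideal.span {x})).compLeft (Fin n)).comp (LinearMap.ker π).subtype)
  have hmem : ∀ a, g₀ a ∈ LinearMap.ker q := by
    intro a
    obtain ⟨k, rfl⟩ := hred.surj a
    rw [hg₀, LinearMap.comp_apply, LinearMap.mem_ker, hq]
    exact k.2
  have hgs : Function.Surjective (g₀.codRestrict _ hmem) := by
    rintro ⟨b, hb⟩
    obtain ⟨f, rfl⟩ := hF.surj b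
    rw [LinearMap.mem_ker, hq] at hb
    exact ⟨Submodule.mkQ _ ⟨f, hb⟩, Subtype.ext (hg₀ _)⟩
  -- the map from the module into the reduction of the syzygy
  have hxm : ∀ f : Fin n → R, x • f ∈ LinearMap.ker π := by
    intro f
    rw [LinearMap.mem_ker, map_smul, x_smul]
  let φ : (Fin n → R) →ₗ[R] LinearMap.ker π :=
    LinearMap.codRestrict (LinearMap.ker π) (x • LinearMap.id) hxm
  have hφ : ∀ f, Submodule.mkQ (Ideal.span {x} • (⊤ : Submodule R (LinearMap.ker π))) (φ f) = 0 ↔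
      π f = 0 := by
    intro f
    rw [hred.ker]
    constructor
    · rintro ⟨k, hk⟩
      have : f = k := pi_regular hR n (congrArg Subtype.val hk)
      rw [this]
      exact k.2
    · intro hf
      exact ⟨⟨f, hf⟩, Subtype.ext rfl⟩
  obtain ⟨j, hj⟩ := exists_liftS (x := x) π hπ ((Submodule.mkQ
    (Ideal.span {x} • (⊤ : Submodule R (LinearMap.ker π)))).comp φ) (fun a ha => (hφ a).2 ha)
  have hjinj : Function.Injective j := by
    rw [injective_iff_map_eq_zero]
    intro a ha
    obtain ⟨f, rfl⟩ := hπ a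
    rw [hj] at ha
    exact (hφ f).1 ha
  have hexj : Function.Exact j (g₀.codRestrict _ hmem) := by
    intro b
    obtain ⟨k, rfl⟩ := hred.surj b
    constructor
    · intro hb
      have hb' := congrArg Subtype.val hb
      rw [LinearMap.codRestrict_apply, hg₀] at hb'
      obtain ⟨f, hf⟩ := (hF.ker _).1 hb'
      refine ⟨π f, ?_⟩
      rw [hj]
      exact congrArg _ (Subtype.ext hf.symm)
    · rintro ⟨a, ha⟩
      obtain ⟨f, rfl⟩ := hπ a
      rw [← ha, hj]
      refine Subtype.ext ?_
      rw [LinearMap.codRestrict_apply, LinearMap.comp_apply, hg₀]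
      exact (hF.ker _).2 ⟨f, rfl⟩
  obtain ⟨c1, c2, c3⟩ := chase (LinearMap.ker q).injective_subtype hqs (exact_ker q) hjinj hgs hexj
    h1 h2
  have key := V.key hx hR hred hred hKreg hKreg
  have res := h _ ((V.key hx hR hred (red_self x) hKreg hR 0).2 c1) ⟨B + 1, (key (B + 1)).2 c2⟩
  exact c3 ((key 0).1 res)

end Main

/-- For a Noetherian local ring `R` of positive depth and a non-zerodivisor
`x` in the maximal ideal, `R` satisfies (SAC) iff `R/xR` satisfies (SAC). -/
theorem stmt_4 (R : Type) [CommRing R] [IsNoetherianRing R] [IsLocalRing R]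
    (hdepth : ∃ y ∈ IsLocalRing.maximalIdeal R, IsSMulRegular R y)
    (x : R) (hx : x ∈ IsLocalRing.maximalIdeal R) (hreg : IsSMulRegular R x) :
    SAC R ↔ SAC (R ⧸ Ideal.span {x}) := by
  exact ⟨quot_of_sac hx hreg, sac_of_quot hx hreg⟩
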